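/- Let 2 ≤ q < ∞. Then R₊(T_{q+1}) is strictly contained in R₊(T_q): every φ : ℕ → ℂ that belongs to R₊(T_{q+1}) also belongs to R₊(T_q), and the function φ₀ : ℕ → ℂ given by φ₀(n) = (−1/q)^{n/2} for n even and φ₀(n) = 0 for n odd (i.e. φ₀(n) = P_n^{(q)}(0)) belongs to R₊(T_q) but does not belong to R₊(T_{q+1}). -/

import Mathlib

/-!
The inclusion holds because every homogeneous tree of degree `q + 1` embeds isometrically in one of
degree `q + 2`: hang on each vertex a planted tree whose added vertices all have degree `q + 2`
(`extGraph`, `ext_isHomTree`, `ext_dist`). The same construction, started from a single edge, shows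
that homogeneous trees of all degrees exist (`exists_homTree`), so the quantification over all of
them is not vacuous.

The function `φ₀` satisfies `φ₀(n+2) = -φ₀(n)/q`. Fix a root. For a vertex `p` with parent `g`, the
vectors `δ_c + δ_g/q`, with `c` running over the `q` children of `p`, are orthogonal, for the form
with kernel `φ₀(d(x,y))`, to every other vertex at most as deep as the children, and their Gram
matrix is a nonnegative multiple of `I - J/q`, where `J` is the all-ones matrix. Moving the mass on
the children of `p` to `g` therefore splits off a nonnegative term, and repeating this reduces
positive definiteness to functions supported on the ball of radius one (`kForm_phi_nonneg`), where
it is again the Cauchy-Schwarz inequality, now for `q + 1` neighbours.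

In degree `q + 2` a vertex has `q + 2` neighbours at mutual distance `2`, and `φ₀(2) = -1/q` is too
negative for that many points (`phi0_not_pd`).
-/

open MeasureTheory Filter Finset
open scoped ComplexOrder

/-- The polynomials `P_n^{(q)}`. -/
noncomputable def treeP (q : ℕ) : ℕ → ℝ → ℝ
  | 0, _ => 1
  | 1, x => x
  | (n+2), x => (1 + 1/(q:ℝ)) * x * treeP q (n+1) x - (1/(q:ℝ)) * treeP q n x

/-- The polynomials `Q_n^{(q)}`. -/
noncomputable def treeQ (q : ℕ) : ℕ → ℝ → ℝ
  | 0, _ => 1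
  | 1, x => (1 + 1/(q:ℝ)) * x
  | (n+2), x => (1 + 1/(q:ℝ)) * x * treeQ q (n+1) x - (1/(q:ℝ)) * treeQ q n x

/-- A kernel `ψ` on a set `X` is positive definite. -/
def IsPDKernel {X : Type*} (ψ : X → X → ℂ) : Prop :=
  ∀ (n : ℕ) (x : Fin n → X) (z : Fin n → ℂ),
    0 ≤ ∑ i, ∑ j, ψ (x i) (x j) * (starRingEnd ℂ) (z i) * z j

/-- `G` is a `(q+1)`-homogeneous tree: connected, acyclic, every vertex has exactly
`q+1` neighbours. -/
def IsHomTree {V : Type} (G : SimpleGraph V) (q : ℕ) : Prop :=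
  G.Connected ∧ G.IsAcyclic ∧ ∀ v : V, (G.neighborSet v).ncard = q + 1

/-- `G` is a homogeneous tree of countably infinite degree. -/
def IsInfTree {V : Type} (G : SimpleGraph V) : Prop :=
  G.Connected ∧ G.IsAcyclic ∧ ∀ v : V, (G.neighborSet v).Countable ∧ (G.neighborSet v).Infinite

/-- The function `φ₀(n) = (-1/q)^(n/2)` for even `n`, `0` for odd `n`. -/
noncomputable def phi0 (q : ℕ) : ℕ → ℂ := fun n =>
  if Even n then (-(1/(q:ℂ)))^(n/2) else 0


/-! ### Distances in a tree -/

section TreeDist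

variable {V : Type} {G : SimpleGraph V}

lemma exists_adj_closer (hG : G.Connected) {o x : V} (hx : x ≠ o) :
    ∃ p, G.Adj x p ∧ G.dist o x = G.dist o p + 1 := by
  obtain ⟨w, hw⟩ := hG.exists_walk_length_eq_dist x o
  cases w with
  | nil => exact absurd rfl hx
  | @cons _ p _ h w =>
    refine ⟨p, h, ?_⟩
    have h1 : G.dist p o ≤ w.length := SimpleGraph.dist_le w
    have h2 : G.dist o x ≤ G.dist o p + G.dist p x := hG.dist_triangle
    have h3 : G.dist p x = 1 := SimpleGraph.dist_eq_one_iff_adj.2 h.symm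
    rw [SimpleGraph.Walk.length_cons, SimpleGraph.dist_comm] at hw
    rw [SimpleGraph.dist_comm] at h1
    omega

/-- In a tree every vertex has at most one neighbour closer to `o`, because a shortest walk to such
a neighbour extends to the unique path ending at the vertex. -/
lemma closer_unique (hG : G.IsTree) {o x p p' : V} (hp : G.Adj x p) (hp' : G.Adj x p')
    (h : G.dist o x = G.dist o p + 1) (h' : G.dist o x = G.dist o p' + 1) : p = p' := by
  obtain ⟨w, hw⟩ := hG.connected.exists_walk_length_eq_dist o p
  obtain ⟨w', hw'⟩ := hG.connected.exists_walk_length_eq_dist o p'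
  have hc : (w.concat hp.symm).IsPath :=
    SimpleGraph.Walk.isPath_of_length_eq_dist _ (by rw [SimpleGraph.Walk.length_concat]; omega)
  have hc' : (w'.concat hp'.symm).IsPath :=
    SimpleGraph.Walk.isPath_of_length_eq_dist _ (by rw [SimpleGraph.Walk.length_concat]; omega)
  have e := congrArg Subtype.val ((hG.isAcyclic.subsingleton_path o x).elim ⟨_, hc⟩ ⟨_, hc'⟩)
  have e2 := congrArg SimpleGraph.Walk.penultimate e
  simpa using e2

/-- If `p` is the parent of `x` (with respect to the root `o`) and `y` lies on the side of `x` of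
the edge `px`, then `y` is a descendant of `x`: its depth is that of `x` plus `d(x,y)`. -/
lemma depth_of_far_side (hG : G.IsTree) {o x p : V} (hp : G.Adj x p)
    (h : G.dist o x = G.dist o p + 1) :
    ∀ (n : ℕ) (y : V), G.dist x y = n → G.dist p y = n + 1 → G.dist o y = G.dist o x + n := by
  intro n
  induction n with
  | zero =>
    intro y hy _
    rw [hG.connected.dist_eq_zero_iff] at hy
    subst hy; simp
  | succ n ih =>
    intro y hy hpy
    have hne : y ≠ x := by rintro rfl; simp at hy
    obtain ⟨y', hyy', hd⟩ := exists_adj_closer hG.connected hne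
    have hpy' : G.dist p y' = n + 1 := by
      have h1 : G.dist p y ≤ G.dist p y' + G.dist y' y := hG.connected.dist_triangle
      have h2 : G.dist p y' ≤ G.dist p x + G.dist x y' := hG.connected.dist_triangle
      rw [SimpleGraph.dist_eq_one_iff_adj.2 hyy'.symm] at h1
      rw [SimpleGraph.dist_eq_one_iff_adj.2 hp.symm] at h2
      omega
    have hy' := ih y' (by omega) hpy'
    rcases hG.dist_eq_dist_add_one_of_adj o hyy' with h1 | h1
    · omega
    · exfalso
      -- `y` would be the parent of `y'`, but the parent of `y'` lies towards `p`
      by_cases hxy : y' = x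
      · subst hxy
        have := closer_unique hG hyy'.symm hp h1 h
        subst this
        simp at hpy
      · obtain ⟨y₂, hy₂, hd₂⟩ := exists_adj_closer hG.connected (o := x) hxy
        obtain ⟨m, rfl⟩ : ∃ m, n = m + 1 := ⟨n - 1, by omega⟩
        rcases hG.dist_eq_dist_add_one_of_adj o hy₂ with h3 | h3
        · have := closer_unique hG hyy'.symm hy₂ h1 h3
          subst this
          omega
        · have h4 : G.dist o y₂ ≤ G.dist o x + G.dist x y₂ := hG.connected.dist_triangle
          omega

lemma dist_via_parent (hG : G.IsTree) {o x p y : V} (hp : G.Adj x p)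
    (h : G.dist o x = G.dist o p + 1) (hy : G.dist o y < G.dist o x + G.dist x y) :
    G.dist x y = G.dist p y + 1 := by
  rcases hG.dist_eq_dist_add_one_of_adj y hp with h1 | h1
  · rwa [SimpleGraph.dist_comm, G.dist_comm (u := y)] at h1
  · rw [SimpleGraph.dist_comm, G.dist_comm (u := y)] at h1
    have := depth_of_far_side hG hp h _ y rfl h1
    omega

lemma dist_siblings (hG : G.IsTree) {p c c' : V} (h : G.Adj p c) (h' : G.Adj p c') (hne : c ≠ c') :
    G.dist c c' = 2 := by
  have h1 : G.dist c c' ≤ G.dist c p + G.dist p c' := hG.connected.dist_triangle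
  rw [SimpleGraph.dist_eq_one_iff_adj.2 h', SimpleGraph.dist_eq_one_iff_adj.2 h.symm] at h1
  have h2 := hG.connected.pos_dist_of_ne hne
  have h3 := hG.dist_eq_dist_add_one_of_adj c h'
  rw [SimpleGraph.dist_eq_one_iff_adj.2 h.symm] at h3
  omega

end TreeDist

/-! ### Enlarging the degree of a homogeneous tree by one -/

section Extension

variable {V : Type}

/-- The vertex set of the enlarged tree: the old vertices, and below each old vertex `v` the words
over `Fin (n+1)`, which form a rooted tree whose root is the empty word. -/
abbrev ExtV (V : Type) (n : ℕ) : Type := V ⊕ (V × List (Fin (n + 1)))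

/-- The parent of an added vertex: the empty word over `v` hangs from `v` itself, and `a :: l` hangs
from `l`. -/
def extPar {n : ℕ} : V × List (Fin (n + 1)) → ExtV V n
  | (v, []) => Sum.inl v
  | (v, _ :: l) => Sum.inr (v, l)

/-- Adjacency of the enlarged tree: the old edges, and the edges joining an added vertex to its
parent. -/
def extAdj (G : SimpleGraph V) (n : ℕ) : ExtV V n → ExtV V n → Prop
  | Sum.inl u, Sum.inl v => G.Adj u v
  | Sum.inl u, Sum.inr t => extPar t = Sum.inl u
  | Sum.inr t, Sum.inl u => extPar t = Sum.inl u
  | Sum.inr s, Sum.inr t => extPar s = Sum.inr t ∨ extPar t = Sum.inr s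

lemma extPar_ne {n : ℕ} (t : V × List (Fin (n + 1))) : extPar t ≠ Sum.inr t := by
  rcases t with ⟨v, _ | ⟨a, l⟩⟩ <;> simp [extPar]

/-- The graph `G` with a planted tree attached at each vertex, all of whose added vertices have
`n + 2` neighbours. -/
def extGraph (G : SimpleGraph V) (n : ℕ) : SimpleGraph (ExtV V n) where
  Adj := extAdj G n
  symm := ⟨by
    rintro (u | s) (v | t) h
    · exact SimpleGraph.Adj.symm (G := G) h
    · exact h
    · exact h
    · exact Or.symm h⟩
  loopless := ⟨by
    rintro (u | s) h
    · exact G.loopless.irrefl _ h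
    · rcases h with h | h <;> exact extPar_ne _ h⟩

/-- The retraction onto the original graph collapsing each attached tree to its base vertex. -/
def extRetract {n : ℕ} : ExtV V n → V
  | Sum.inl v => v
  | Sum.inr t => t.1

lemma extRetract_par {n : ℕ} (t : V × List (Fin (n + 1))) : extRetract (extPar t) = t.1 := by
  rcases t with ⟨v, _ | ⟨a, l⟩⟩ <;> rfl

lemma extAdj_par (G : SimpleGraph V) (n : ℕ) (t : V × List (Fin (n + 1))) :
    (extGraph G n).Adj (Sum.inr t) (extPar t) := by
  rcases t with ⟨v, _ | ⟨a, l⟩⟩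
  · exact rfl
  · exact Or.inl rfl

lemma extAdj_cases {G : SimpleGraph V} {n : ℕ} {x y : ExtV V n} (h : (extGraph G n).Adj x y) :
    (∃ u v, x = Sum.inl u ∧ y = Sum.inl v ∧ G.Adj u v) ∨
      (∃ t, x = Sum.inr t ∧ y = extPar t) ∨ (∃ t, y = Sum.inr t ∧ x = extPar t) := by
  rcases x with u | s <;> rcases y with v | t
  · exact Or.inl ⟨u, v, rfl, rfl, h⟩
  · exact Or.inr (Or.inr ⟨t, rfl, Eq.symm h⟩)
  · exact Or.inr (Or.inl ⟨s, rfl, Eq.symm h⟩)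
  · rcases h with h | h
    · exact Or.inr (Or.inl ⟨s, rfl, h.symm⟩)
    · exact Or.inr (Or.inr ⟨t, rfl, h.symm⟩)

lemma extRetract_adj {G : SimpleGraph V} {n : ℕ} {x y : ExtV V n} (h : (extGraph G n).Adj x y) :
    extRetract x = extRetract y ∨ ∃ u v, x = Sum.inl u ∧ y = Sum.inl v ∧ G.Adj u v := by
  rcases extAdj_cases h with h | ⟨t, rfl, rfl⟩ | ⟨t, rfl, rfl⟩
  · exact Or.inr h
  · exact Or.inl (extRetract_par t).symm
  · exact Or.inl (extRetract_par t)

/-- The inclusion of the original graph. -/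
def extHom (G : SimpleGraph V) (n : ℕ) : G →g extGraph G n where
  toFun := Sum.inl
  map_rel' h := h

lemma ext_reachable (G : SimpleGraph V) (n : ℕ) (v : V) (l : List (Fin (n + 1))) :
    (extGraph G n).Reachable (Sum.inr (v, l)) (Sum.inl v) := by
  induction l with
  | nil => exact (extAdj_par G n (v, [])).reachable
  | cons a l ih => exact (extAdj_par G n (v, a :: l)).reachable.trans ih

lemma ext_connected {G : SimpleGraph V} (hG : G.Connected) (n : ℕ) : (extGraph G n).Connected := by
  have key : ∀ x : ExtV V n, (extGraph G n).Reachable x (Sum.inl (extRetract x)) := by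
    rintro (v | ⟨v, l⟩)
    · exact SimpleGraph.Reachable.refl _
    · exact ext_reachable G n v l
  have := hG.nonempty
  have : Nonempty (ExtV V n) := ⟨Sum.inl hG.nonempty.some⟩
  refine SimpleGraph.Connected.mk fun x y => ?_
  exact (key x).trans (((hG (extRetract x) (extRetract y)).map (extHom G n)).trans (key y).symm)

lemma ext_dist {G : SimpleGraph V} (hG : G.Connected) (n : ℕ) (x y : V) :
    (extGraph G n).dist (Sum.inl x) (Sum.inl y) = G.dist x y := by
  apply le_antisymm
  · obtain ⟨w, hw⟩ := hG.exists_walk_length_eq_dist x y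
    rw [← hw, ← SimpleGraph.Walk.length_map (extHom G n) w]
    exact SimpleGraph.dist_le _
  · have key : ∀ (a b : ExtV V n) (w : (extGraph G n).Walk a b),
        G.dist (extRetract a) (extRetract b) ≤ w.length := by
      intro a b w
      induction w with
      | nil => simp
      | @cons a c b h w ih =>
        rw [SimpleGraph.Walk.length_cons]
        rcases extRetract_adj h with h | ⟨u, v, rfl, rfl, h'⟩
        · rw [h]; omega
        · have h1 : G.dist u (extRetract b) ≤ G.dist u v + G.dist v (extRetract b) :=
            hG.dist_triangle
          rw [SimpleGraph.dist_eq_one_iff_adj.2 h'] at h1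
          simp only [extRetract] at ih ⊢
          simp only [extRetract] at h1
          omega
    obtain ⟨w, hw⟩ := (ext_connected hG n).exists_walk_length_eq_dist (Sum.inl x) (Sum.inl y)
    rw [← hw]
    exact key _ _ w

lemma reachable_invariant {W : Type} {H : SimpleGraph W} {P : W → Prop}
    (hP : ∀ x y, H.Adj x y → P x → P y) {a b : W} (h : H.Reachable a b) (ha : P a) : P b := by
  obtain ⟨w⟩ := h
  induction w with
  | nil => exact ha
  | cons h _ ih => exact ih (hP _ _ h ha)

/-- Every edge of the enlarged graph is a bridge: an old edge because the retraction carries a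
detour to a detour in `G`, and an added edge because only that edge leaves the set of descendants
of its lower endpoint. -/
lemma ext_acyclic {G : SimpleGraph V} (hG : G.IsAcyclic) (n : ℕ) : (extGraph G n).IsAcyclic := by
  have added : ∀ t : V × List (Fin (n + 1)),
      ¬ ((extGraph G n).deleteEdges {s(Sum.inr t, extPar t)}).Reachable (Sum.inr t) (extPar t) := by
    rintro ⟨v, l⟩ hr
    let P : ExtV V n → Prop := fun x => ∃ m, x = Sum.inr (v, m) ∧ l <:+ m
    have hP := reachable_invariant (P := P) ?_ hr ⟨l, rfl, List.suffix_refl l⟩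
    · obtain ⟨m, hm, hs⟩ := hP
      rcases l with _ | ⟨a, l⟩
      · simp [extPar] at hm
      · simp only [extPar, Sum.inr.injEq, Prod.mk.injEq, true_and] at hm
        subst hm
        have := hs.length_le
        simp at this
    · rintro x y hxy ⟨m, rfl, hs⟩
      rw [SimpleGraph.deleteEdges_adj] at hxy
      obtain ⟨hxy, hne⟩ := hxy
      rcases extAdj_cases hxy with ⟨_, _, h, _⟩ | ⟨t, ht, rfl⟩ | ⟨t, rfl, ht⟩
      · simp at h
      · simp only [Sum.inr.injEq] at ht
        subst ht
        rcases m with _ | ⟨a, m⟩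
        · have : l = [] := List.suffix_nil.1 hs
          subst this
          exact absurd rfl hne
        · rcases List.suffix_cons_iff.1 hs with h | h
          · subst h
            exact absurd rfl hne
          · exact ⟨m, rfl, h⟩
      · rcases t with ⟨u, _ | ⟨a, m'⟩⟩
        · simp [extPar] at ht
        · simp only [extPar, Sum.inr.injEq, Prod.mk.injEq] at ht
          obtain ⟨rfl, rfl⟩ := ht
          exact ⟨_, rfl, hs.trans (List.suffix_cons _ _)⟩
  rw [SimpleGraph.isAcyclic_iff_forall_adj_isBridge] at hG ⊢
  intro x y hxy
  rcases extAdj_cases hxy with ⟨u, v, rfl, rfl, h⟩ | ⟨t, rfl, rfl⟩ | ⟨t, rfl, rfl⟩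
  · have hb := hG h
    rw [SimpleGraph.isBridge_iff] at hb ⊢
    intro hr
    apply hb
    refine reachable_invariant
      (P := fun x => (G.deleteEdges {s(u, v)}).Reachable u (extRetract x)) ?_ hr
      (SimpleGraph.Reachable.refl _)
    intro a b hab ha
    rw [SimpleGraph.deleteEdges_adj] at hab
    obtain ⟨hab, hne⟩ := hab
    rcases extRetract_adj hab with h' | ⟨u', v', rfl, rfl, h'⟩
    · rwa [← h']
    · refine ha.trans (SimpleGraph.Adj.reachable ?_)
      rw [SimpleGraph.deleteEdges_adj]
      refine ⟨h', fun hmem => hne ?_⟩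
      simp only [Set.mem_singleton_iff, extRetract] at hmem ⊢
      simpa using hmem
  · rw [SimpleGraph.isBridge_iff]
    exact added t
  · rw [SimpleGraph.isBridge_iff, Sym2.eq_swap]
    exact fun h => added t h.symm

lemma ext_isHomTree {G : SimpleGraph V} {n : ℕ} (hG : IsHomTree G n) :
    IsHomTree (extGraph G n) (n + 1) := by
  obtain ⟨hc, ha, hd⟩ := hG
  refine ⟨ext_connected hc n, ext_acyclic ha n, ?_⟩
  rintro (v | ⟨v, l⟩)
  · have hs : (extGraph G n).neighborSet (Sum.inl v) =
        insert (Sum.inr (v, [])) (Sum.inl '' G.neighborSet v) := by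
      ext x
      rcases x with u | ⟨u, _ | ⟨a, l⟩⟩
      · simp [SimpleGraph.mem_neighborSet, extGraph, extAdj]
      · simp [SimpleGraph.mem_neighborSet, extGraph, extAdj, extPar]
      · simp [SimpleGraph.mem_neighborSet, extGraph, extAdj, extPar]
    have hfin : (G.neighborSet v).Finite := Set.finite_of_ncard_ne_zero (by rw [hd]; omega)
    rw [hs, Set.ncard_insert_of_notMem (by simp) (hfin.image _),
      Set.ncard_image_of_injective _ Sum.inl_injective, hd]
  · have hs : (extGraph G n).neighborSet (Sum.inr (v, l)) =
        insert (extPar (v, l)) (Set.range fun a : Fin (n + 1) => Sum.inr (v, a :: l)) := by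
      ext x
      constructor
      · intro hx
        rcases extAdj_cases hx with ⟨_, _, h, _⟩ | ⟨t, ht, rfl⟩ | ⟨t, rfl, ht⟩
        · simp at h
        · simp only [Sum.inr.injEq] at ht
          subst ht
          exact Set.mem_insert _ _
        · rcases t with ⟨u, _ | ⟨a, m⟩⟩
          · simp [extPar] at ht
          · simp only [extPar, Sum.inr.injEq, Prod.mk.injEq] at ht
            obtain ⟨rfl, rfl⟩ := ht
            exact Set.mem_insert_of_mem _ ⟨a, rfl⟩
      · rintro (rfl | ⟨a, rfl⟩)
        · exact extAdj_par G n (v, l)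
        · exact (extAdj_par G n (v, a :: l)).symm
    have hinj : Function.Injective
        (fun a : Fin (n + 1) => (Sum.inr (v, a :: l) : ExtV V n)) := by
      intro a b h
      simpa using h
    rw [hs, Set.ncard_insert_of_notMem _ (Set.finite_range _), ← Set.image_univ,
      Set.ncard_image_of_injective _ hinj, Set.ncard_univ, Nat.card_fin]
    rintro ⟨a, h⟩
    rcases l with _ | ⟨b, l⟩
    · simp [extPar] at h
    · simp only [extPar, Sum.inr.injEq, Prod.mk.injEq, true_and] at h
      have := congrArg List.length h
      simp only [List.length_cons] at this
      omega

end Extension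

/-- Homogeneous trees of every degree exist: start from a single edge and enlarge the degree. -/
lemma exists_homTree (n : ℕ) : ∃ (V : Type) (G : SimpleGraph V), IsHomTree G n := by
  induction n with
  | zero =>
    refine ⟨Bool, ⊤, SimpleGraph.connected_top, SimpleGraph.IsAcyclic.of_card_le_two (by simp), ?_⟩
    intro v
    have : (⊤ : SimpleGraph Bool).neighborSet v = {!v} := by
      ext x; cases v <;> cases x <;> simp
    rw [this, Set.ncard_singleton]
  | succ n ih =>
    obtain ⟨V, G, hG⟩ := ih
    exact ⟨_, extGraph G n, ext_isHomTree hG⟩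

/-! ### Positive definiteness of `φ₀` on the tree of degree `q + 1` -/

section Phi0

/-- The real-valued version of `phi0`. -/
noncomputable def phiR (q : ℕ) (n : ℕ) : ℝ :=
  if Even n then (-(1 / (q : ℝ))) ^ (n / 2) else 0

lemma phiR_zero (q : ℕ) : phiR q 0 = 1 := by simp [phiR]

lemma phiR_one (q : ℕ) : phiR q 1 = 0 := by simp [phiR]

lemma phiR_add_two (q n : ℕ) : phiR q (n + 2) = -(1 / (q : ℝ)) * phiR q n := by
  unfold phiR
  by_cases h : Even n
  · rw [if_pos h, if_pos (by simpa [Nat.even_add] using h), Nat.add_div_right _ (by norm_num),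
      pow_succ]
    ring
  · rw [if_neg h, if_neg (by simpa [Nat.even_add] using h)]
    simp

lemma phiR_two (q : ℕ) : phiR q 2 = -(1 / (q : ℝ)) := by
  have := phiR_add_two q 0
  rwa [phiR_zero, mul_one] at this

lemma phi0_eq (q n : ℕ) : phi0 q n = (phiR q n : ℂ) := by
  unfold phi0 phiR
  split_ifs <;> simp

/-- The bilinear form on finitely supported real functions with kernel `K`. -/
noncomputable def kForm {V : Type} (K : V → V → ℝ) : (V →₀ ℝ) →ₗ[ℝ] (V →₀ ℝ) →ₗ[ℝ] ℝ :=
  Finsupp.linearCombination ℝ fun x => Finsupp.linearCombination ℝ (K x)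

lemma kForm_single {V : Type} (K : V → V → ℝ) (x y : V) :
    kForm K (Finsupp.single x 1) (Finsupp.single y 1) = K x y := by
  simp [kForm]

lemma kForm_comm {V : Type} (K : V → V → ℝ) (hK : ∀ x y, K x y = K y x) (z w : V →₀ ℝ) :
    kForm K z w = kForm K w z := by
  simp only [kForm, Finsupp.linearCombination_apply, Finsupp.sum, LinearMap.sum_apply,
    LinearMap.smul_apply, smul_eq_mul, Finset.mul_sum]
  rw [Finset.sum_comm]
  refine Finset.sum_congr rfl fun x _ => Finset.sum_congr rfl fun y _ => ?_
  rw [hK x y]; ring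

/-- If every pair of distinct vectors of a family has product `b` and every vector has square
`a + b`, with `a ≥ 0` and `a + b * card ≥ 0`, the form is nonnegative on the span of the family, by
the Cauchy-Schwarz inequality. -/
lemma simplex_nonneg {V E : Type} [AddCommGroup E] [Module ℝ E] [DecidableEq V]
    (B : E →ₗ[ℝ] E →ₗ[ℝ] ℝ) (C : Finset V) (e : V → E) (a b : ℝ) (z : V → ℝ)
    (hB : ∀ c ∈ C, ∀ c' ∈ C, B (e c) (e c') = if c = c' then a + b else b)
    (ha : 0 ≤ a) (hb : 0 ≤ a + b * C.card) :
    0 ≤ B (∑ c ∈ C, z c • e c) (∑ c ∈ C, z c • e c) := by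
  have h1 : B (∑ c ∈ C, z c • e c) (∑ c ∈ C, z c • e c) =
      a * ∑ c ∈ C, z c ^ 2 + b * (∑ c ∈ C, z c) ^ 2 := by
    simp only [map_sum, LinearMap.sum_apply, map_smul, LinearMap.smul_apply, smul_eq_mul]
    have h2 : ∀ c ∈ C, ∑ c' ∈ C, z c * (z c' * B (e c') (e c)) =
        a * z c ^ 2 + b * (z c * ∑ c' ∈ C, z c') := by
      intro c hc
      have h3 : ∀ c' ∈ C, z c * (z c' * B (e c') (e c)) =
          (if c' = c then a * z c ^ 2 else 0) + b * (z c * z c') := by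
        intro c' hc'
        rw [hB c' hc' c hc]
        split_ifs with h
        · subst h; ring
        · ring
      rw [Finset.sum_congr rfl h3, Finset.sum_add_distrib, Finset.sum_ite_eq' C c, if_pos hc,
        Finset.mul_sum, Finset.mul_sum]
    simp only [Finset.mul_sum] at h2 ⊢
    rw [Finset.sum_congr rfl h2, Finset.sum_add_distrib, sq, Finset.sum_mul_sum, Finset.mul_sum]
    simp only [Finset.mul_sum]
  rw [h1]
  have hcs : (∑ c ∈ C, z c) ^ 2 ≤ C.card * ∑ c ∈ C, z c ^ 2 := sq_sum_le_card_mul_sum_sq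
  have hS : 0 ≤ ∑ c ∈ C, z c ^ 2 := Finset.sum_nonneg fun c _ => sq_nonneg _
  by_cases hb0 : 0 ≤ b
  · positivity
  · have h4 : b * (C.card * ∑ c ∈ C, z c ^ 2) ≤ b * (∑ c ∈ C, z c) ^ 2 :=
      mul_le_mul_of_nonpos_left hcs (by linarith)
    nlinarith [mul_nonneg hb hS]

lemma kForm_nonneg_of_orth {V : Type} (K : V → V → ℝ) (hK : ∀ x y, K x y = K y x) (z' w : V →₀ ℝ)
    (hz' : 0 ≤ kForm K z' z') (hw : 0 ≤ kForm K w w) (h : kForm K w z' = 0) :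
    0 ≤ kForm K (z' + w) (z' + w) := by
  have h' := kForm_comm K hK z' w
  simp only [map_add, LinearMap.add_apply]
  linarith

lemma kForm_eq_zero {V : Type} (K : V → V → ℝ) (u z : V →₀ ℝ)
    (h : ∀ y ∈ z.support, kForm K u (Finsupp.single y 1) = 0) : kForm K u z = 0 := by
  conv_lhs => rw [← Finsupp.sum_single z]
  rw [Finsupp.sum, map_sum]
  refine Finset.sum_eq_zero fun y hy => ?_
  rw [← mul_one (z y), ← smul_eq_mul, ← Finsupp.smul_single, map_smul, h y hy, smul_zero]

variable {V : Type} {G : SimpleGraph V} {q : ℕ}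

lemma exists_nbrs (hG : IsHomTree G q) (v : V) :
    ∃ C : Finset V, (∀ x, x ∈ C ↔ G.Adj v x) ∧ C.card = q + 1 := by
  have hfin : (G.neighborSet v).Finite :=
    Set.finite_of_ncard_ne_zero (by rw [hG.2.2]; omega)
  refine ⟨hfin.toFinset, fun x => by simp, ?_⟩
  rw [← Set.ncard_eq_toFinset_card _ hfin, hG.2.2]

/-- The form with kernel `φ₀(d(x,y))` is nonnegative on every `z`. By induction on the total depth
of the support of `z`: for `p` the parent of a deepest vertex of the support and `g` the parent of
`p`, the vectors `δ_c + (1/q) δ_g`, with `c` a child of `p`, are orthogonal to all other vertices in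
play and form a regular simplex, so the mass of `z` on the children of `p` can be moved to `g`. -/
lemma kForm_phi_nonneg (hq : 1 ≤ q) (hG : IsHomTree G q) (o : V) :
    ∀ (m : ℕ) (z : V →₀ ℝ), ∑ x ∈ z.support, G.dist o x = m →
      0 ≤ kForm (fun x y => phiR q (G.dist x y)) z z := by
  classical
  have hT : G.IsTree := ⟨hG.1, hG.2.1⟩
  have hq0 : (0 : ℝ) < q := by exact_mod_cast hq
  set K : V → V → ℝ := fun x y => phiR q (G.dist x y) with hKdef
  have hK : ∀ x y, K x y = K y x := fun x y => by simp only [hKdef, G.dist_comm]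
  set r : ℝ := -(1 / (q : ℝ)) with hr
  have hrneg : 0 ≤ 1 - r := by
    have : 0 < 1 / (q : ℝ) := by positivity
    linarith
  have hself : ∀ x, K x x = 1 := fun x => by simp only [hKdef, SimpleGraph.dist_self, phiR_zero]
  have hsib : ∀ p c c', G.Adj p c → G.Adj p c' → c ≠ c' → K c c' = r := by
    intro p c c' h h' hne
    simp only [hKdef, dist_siblings hT h h' hne, phiR_two, hr]
  have hadj : ∀ x y, G.Adj x y → K x y = 0 := by
    intro x y h
    simp only [hKdef, SimpleGraph.dist_eq_one_iff_adj.2 h, phiR_one]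
  intro m
  induction m using Nat.strong_induction_on with
  | _ m ih =>
  intro z hz
  by_cases hdeep : ∃ x ∈ z.support, 2 ≤ G.dist o x
  · obtain ⟨x₁, hx₁, hx₁d⟩ := hdeep
    obtain ⟨x, hx, hmax⟩ := Finset.exists_max_image z.support (G.dist o) ⟨x₁, hx₁⟩
    have hxd : 2 ≤ G.dist o x := hx₁d.trans (hmax x₁ hx₁)
    obtain ⟨p, hxp, hpd⟩ := exists_adj_closer hG.1 (o := o) (x := x)
      (by rintro rfl; simp at hxd)
    obtain ⟨g, hpg, hgd⟩ := exists_adj_closer hG.1 (o := o) (x := p)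
      (by rintro rfl; rw [SimpleGraph.dist_self] at hpd; omega)
    obtain ⟨D, hD, hDcard⟩ := exists_nbrs hG p
    set C := D.erase g with hC
    have hCcard : C.card = q := by
      rw [hC, Finset.card_erase_of_mem ((hD g).2 hpg), hDcard]; rfl
    have hgC : g ∉ C := by simp [hC]
    have hCadj : ∀ c ∈ C, G.Adj p c := fun c hc => (hD c).1 (Finset.mem_of_mem_erase hc)
    have hCg : ∀ c ∈ C, c ≠ g := fun c hc => Finset.ne_of_mem_erase hc
    have hCd : ∀ c ∈ C, G.dist o c = G.dist o p + 1 := by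
      intro c hc
      rcases hT.dist_eq_dist_add_one_of_adj o (hCadj c hc) with h | h
      · exact absurd (closer_unique hT (hCadj c hc) hpg h hgd) (hCg c hc)
      · exact h
    have hxC : x ∈ C := by
      rw [hC, Finset.mem_erase]
      exact ⟨by rintro rfl; omega, (hD x).2 hxp.symm⟩
    let e : V → (V →₀ ℝ) := fun c => Finsupp.single c 1 - r • Finsupp.single g 1
    set w : V →₀ ℝ := ∑ c ∈ C, z c • e c with hw
    have hwval : ∀ y, y ≠ g → w y = if y ∈ C then z y else 0 := by
      intro y hy
      rw [hw, Finsupp.finsetSum_apply]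
      have : ∀ c ∈ C, (z c • e c) y = if c = y then z y else 0 := by
        intro c _
        simp only [e, Finsupp.smul_apply, Finsupp.sub_apply, Finsupp.single_apply, smul_eq_mul,
          if_neg hy.symm]
        split_ifs with h
        · subst h; ring
        · ring
      rw [Finset.sum_congr rfl this, Finset.sum_ite_eq']
    have hsupp : ∀ y ∈ (z - w).support, y = g ∨ (y ∈ z.support ∧ y ∉ C) := by
      intro y hy
      by_cases hyg : y = g
      · exact Or.inl hyg
      · right
        rw [Finsupp.mem_support_iff, Finsupp.sub_apply, hwval y hyg] at hy
        split_ifs at hy with h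
        · simp at hy
        · exact ⟨by simpa using hy, h⟩
    have hmeas : ∑ y ∈ (z - w).support, G.dist o y < m := by
      have hsub : (z - w).support ⊆ insert g (z.support.erase x) := by
        intro y hy
        rcases hsupp y hy with h | ⟨h, h'⟩
        · exact Finset.mem_insert.2 (Or.inl h)
        · refine Finset.mem_insert_of_mem (Finset.mem_erase.2 ⟨?_, h⟩)
          rintro rfl; exact h' hxC
      have h1 : ∑ y ∈ insert g (z.support.erase x), G.dist o y ≤
          G.dist o g + ∑ y ∈ z.support.erase x, G.dist o y := by
        by_cases hg : g ∈ z.support.erase x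
        · rw [Finset.insert_eq_of_mem hg]; omega
        · rw [Finset.sum_insert hg]
      have h2 := Finset.add_sum_erase z.support (G.dist o) hx
      have h3 := Finset.sum_le_sum_of_subset (f := G.dist o) hsub
      omega
    have hKcg : ∀ c ∈ C, K c g = r := fun c hc => hsib p c g (hCadj c hc) hpg (hCg c hc)
    have horth : ∀ c ∈ C, ∀ y, G.dist o y ≤ G.dist o x → y ∉ C →
        kForm K (e c) (Finsupp.single y 1) = 0 := by
      intro c hc y hy hyC
      simp only [e, map_sub, map_smul, LinearMap.sub_apply, LinearMap.smul_apply, kForm_single,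
        smul_eq_mul]
      by_cases hyp : y = p
      · subst hyp
        rw [hadj c y (hCadj c hc).symm, hadj g y hpg.symm]; ring
      · by_cases hyg : y = g
        · subst hyg
          rw [hKcg c hc, hself]; ring
        · have hcy : c ≠ y := by rintro rfl; exact hyC hc
          have hcpos := hG.1.pos_dist_of_ne hcy
          have hcd := hCd c hc
          have h1 : G.dist c y = G.dist p y + 1 :=
            dist_via_parent hT (o := o) (hCadj c hc).symm hcd (by omega)
          have h2 : G.dist p y = G.dist g y + 1 := by
            refine dist_via_parent hT hpg hgd ?_
            have hp1 := hG.1.pos_dist_of_ne (Ne.symm hyp)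
            have hp2 : G.dist p y ≠ 1 := by
              rw [Ne, SimpleGraph.dist_eq_one_iff_adj]
              intro h
              exact hyC (Finset.mem_erase.2 ⟨hyg, (hD y).2 h⟩)
            omega
          simp only [hKdef]
          rw [h1, h2, phiR_add_two]
          ring
    have hwz : kForm K w (z - w) = 0 := by
      refine kForm_eq_zero K _ _ fun y hy => ?_
      rw [hw, map_sum, LinearMap.sum_apply]
      refine Finset.sum_eq_zero fun c hc => ?_
      rw [map_smul, LinearMap.smul_apply, smul_eq_zero]
      right
      rcases hsupp y hy with rfl | ⟨h, h'⟩
      · exact horth c hc y (by omega) hgC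
      · exact horth c hc y (hmax y h) h'
    have hww : 0 ≤ kForm K w w := by
      rw [hw]
      refine simplex_nonneg (kForm K) C e (1 - r) (r - r ^ 2) z ?_ hrneg ?_
      · intro c hc c' hc'
        simp only [e, map_sub, map_smul, LinearMap.sub_apply, LinearMap.smul_apply, kForm_single,
          smul_eq_mul]
        rw [hKcg c hc, hK g c', hKcg c' hc', hself]
        split_ifs with h
        · subst h; rw [hself]; ring
        · rw [hsib p c c' (hCadj c hc) (hCadj c' hc') h]; ring
      · rw [hCcard, hr]
        apply le_of_eq
        field_simp
        ring
    have := kForm_nonneg_of_orth K hK (z - w) w (ih _ hmeas _ rfl) hww hwz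
    rwa [sub_add_cancel] at this
  · -- the support lies in the ball of radius one, where only the simplex of neighbours of `o` and
    -- the vertex `o`, orthogonal to it, remain
    push Not at hdeep
    obtain ⟨C, hC, hCcard⟩ := exists_nbrs hG o
    let e : V → (V →₀ ℝ) := fun c => Finsupp.single c 1
    set w : V →₀ ℝ := ∑ c ∈ C, z c • e c with hw
    have hoC : o ∉ C := fun h => G.loopless.irrefl _ ((hC o).1 h)
    have hzw : z - w = z o • Finsupp.single o 1 := by
      ext y
      have hwy : w y = if y ∈ C then z y else 0 := by
        rw [hw, Finsupp.finsetSum_apply]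
        simp [e, Finsupp.single_apply]
      rw [Finsupp.sub_apply, hwy]
      by_cases hyo : y = o
      · subst hyo; simp [hoC]
      · have h0 : (z o • Finsupp.single o (1 : ℝ)) y = 0 := by
          simp [Ne.symm hyo]
        rw [h0]
        split_ifs with h
        · simp
        · by_contra hne
          have hy := hdeep y (by simpa using hne)
          have hpos := hG.1.pos_dist_of_ne (Ne.symm hyo)
          exact h ((hC y).2 (SimpleGraph.dist_eq_one_iff_adj.1 (by omega)))
    have hz' : 0 ≤ kForm K (z - w) (z - w) := by
      rw [hzw]
      simp only [map_smul, LinearMap.smul_apply, kForm_single, hself, smul_eq_mul]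
      nlinarith [mul_self_nonneg (z o)]
    have hwz : kForm K w (z - w) = 0 := by
      rw [hzw, map_smul, hw, map_sum, LinearMap.sum_apply, smul_eq_zero]
      right
      refine Finset.sum_eq_zero fun c hc => ?_
      rw [map_smul, LinearMap.smul_apply, kForm_single, hadj c o ((hC c).1 hc).symm, smul_zero]
    have hww : 0 ≤ kForm K w w := by
      rw [hw]
      refine simplex_nonneg (kForm K) C e (1 - r) r z ?_ hrneg ?_
      · intro c hc c' hc'
        simp only [e, kForm_single]
        split_ifs with h
        · subst h; rw [hself]; ring
        · exact hsib o c c' ((hC c).1 hc) ((hC c').1 hc') h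
      · rw [hCcard, hr]
        apply le_of_eq
        push_cast
        field_simp
        ring
    have := kForm_nonneg_of_orth K hK (z - w) w hz' hww hwz
    rwa [sub_add_cancel] at this

/-- A symmetric real kernel with nonnegative real form is positive definite. -/
lemma isPDKernel_of_real (K : V → V → ℝ) (hK : ∀ x y, K x y = K y x)
    (h : ∀ z, 0 ≤ kForm K z z) : IsPDKernel (fun x y => (K x y : ℂ)) := by
  intro n x z
  have real : ∀ a : Fin n → ℝ, 0 ≤ ∑ i, ∑ j, K (x i) (x j) * (a i * a j) := by
    intro a
    have h1 := h (∑ i, a i • Finsupp.single (x i) 1)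
    simp only [map_sum, LinearMap.sum_apply, map_smul, LinearMap.smul_apply, kForm_single,
      smul_eq_mul, Finset.mul_sum] at h1
    rw [Finset.sum_comm] at h1
    refine h1.trans_eq (Finset.sum_congr rfl fun i _ => Finset.sum_congr rfl fun j _ => by ring)
  rw [Complex.nonneg_iff]
  constructor
  · have h1 := real fun i => (z i).re
    have h2 := real fun i => (z i).im
    have h3 : (∑ i, ∑ j, (K (x i) (x j) : ℂ) * (starRingEnd ℂ) (z i) * z j).re =
        ∑ i, ∑ j, K (x i) (x j) * ((z i).re * (z j).re) +
          ∑ i, ∑ j, K (x i) (x j) * ((z i).im * (z j).im) := by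
      simp only [Complex.re_sum, ← Finset.sum_add_distrib]
      refine Finset.sum_congr rfl fun i _ => Finset.sum_congr rfl fun j _ => ?_
      simp
      ring
    rw [h3]
    exact add_nonneg h1 h2
  · have h3 : (∑ i, ∑ j, (K (x i) (x j) : ℂ) * (starRingEnd ℂ) (z i) * z j).im =
        ∑ i, ∑ j, K (x i) (x j) * ((z i).re * (z j).im) -
          ∑ i, ∑ j, K (x i) (x j) * ((z i).im * (z j).re) := by
      simp only [Complex.im_sum, ← Finset.sum_sub_distrib]
      refine Finset.sum_congr rfl fun i _ => Finset.sum_congr rfl fun j _ => ?_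
      simp
      ring
    rw [h3, eq_comm, sub_eq_zero, Finset.sum_comm]
    refine Finset.sum_congr rfl fun i _ => Finset.sum_congr rfl fun j _ => ?_
    rw [hK]; ring

/-- On the tree of degree `q + 2` the `q + 2` neighbours of a vertex have mutual distance `2`, and
the sum of the kernel over them is `(q + 2) (1 - (q + 1) / q) < 0`. -/
lemma phi0_not_pd (hq : 1 ≤ q) (hG : IsHomTree G (q + 1)) :
    ¬ IsPDKernel (fun x y => phi0 q (G.dist x y)) := by
  classical
  intro h
  have hT : G.IsTree := ⟨hG.1, hG.2.1⟩
  have hq0 : (0 : ℝ) < q := by exact_mod_cast hq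
  obtain ⟨v⟩ := hG.1.nonempty
  obtain ⟨C, hC, hCcard⟩ := exists_nbrs hG v
  let f := C.equivFinOfCardEq hCcard
  have h1 := h (q + 1 + 1) (fun i => (f.symm i : V)) (fun _ => 1)
  have hval : ∀ i j : Fin (q + 1 + 1),
      phi0 q (G.dist (f.symm i : V) (f.symm j : V)) * (starRingEnd ℂ) 1 * 1 =
        (((if i = j then 1 + 1 / (q : ℝ) else 0) - 1 / (q : ℝ) : ℝ) : ℂ) := by
    intro i j
    rw [phi0_eq, map_one, mul_one, mul_one]
    congr 1
    split_ifs with hij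
    · subst hij
      rw [SimpleGraph.dist_self, phiR_zero]; ring
    · rw [dist_siblings hT ((hC _).1 (f.symm i).2) ((hC _).1 (f.symm j).2) fun hne =>
        hij (f.symm.injective (Subtype.ext hne)), phiR_two]
      ring
  simp only [hval] at h1
  have h2 : (0 : ℝ) ≤ ∑ i : Fin (q + 1 + 1), ∑ j : Fin (q + 1 + 1),
      ((if i = j then 1 + 1 / (q : ℝ) else 0) - 1 / (q : ℝ)) := by
    exact_mod_cast h1
  simp only [Finset.sum_sub_distrib, Finset.sum_ite_eq, Finset.mem_univ, if_true,
    Finset.sum_const, Finset.card_univ, Fintype.card_fin, nsmul_eq_mul] at h2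
  push_cast at h2
  have h3 : ((q : ℝ) + 1 + 1) * (1 + 1 / q) - (q + 1 + 1) * ((q + 1 + 1) * (1 / q)) =
      -((q + 2) / q) := by
    field_simp
    ring
  rw [h3] at h2
  have : 0 < ((q : ℝ) + 2) / q := by positivity
  linarith

end Phi0

theorem stmt_5 (q : ℕ) (hq : 2 ≤ q) :
    (∀ φ : ℕ → ℂ,
        (∀ (V : Type) (G : SimpleGraph V), IsHomTree G (q+1) →
            IsPDKernel (fun x y => φ (G.dist x y))) →
        (∀ (V : Type) (G : SimpleGraph V), IsHomTree G q →
            IsPDKernel (fun x y => φ (G.dist x y)))) ∧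
    (∀ (V : Type) (G : SimpleGraph V), IsHomTree G q →
        IsPDKernel (fun x y => phi0 q (G.dist x y))) ∧
    ¬(∀ (V : Type) (G : SimpleGraph V), IsHomTree G (q+1) →
        IsPDKernel (fun x y => phi0 q (G.dist x y))) := by
  refine ⟨fun φ hφ V G hG n x z => ?_, fun V G hG => ?_, fun h => ?_⟩
  · have := hφ _ _ (ext_isHomTree hG) n (fun i => Sum.inl (x i)) z
    simpa only [ext_dist hG.1] using this
  · obtain ⟨o⟩ := hG.1.nonempty
    simp only [phi0_eq]
    exact isPDKernel_of_real _ (fun x y => by rw [G.dist_comm])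
      fun z => kForm_phi_nonneg (by omega) hG o _ z rfl
  · obtain ⟨V, G, hG⟩ := exists_homTree (q + 1)
    exact phi0_not_pd (by omega) hG (h V G hG)
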